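/- (Torelli's identity) Let n be even and f(x,y) = (y−x)^{n-1}. Then the Pfaffian of the n×n skew-symmetric matrix with (i,j) entry (x_j − x_i)^{n-1} equals (−1)^{binom(n/2,2)} · Π_{i=0}^{n/2−1} binom(n−1, i) · Π_{1 ≤ i < j ≤ n} (x_j − x_i). -/

import Mathlib

/-!
Torelli's identity follows from `Pf (V * C * Vᵀ) = det V * Pf C` for skew-symmetric `C`.
By the binomial theorem the matrix `(x_b - x_a) ^ (n - 1)`, `n = 2 * m`, is `V * C * Vᵀ` with `V`
the Vandermonde matrix and `C = binomMat m` supported on the antidiagonal `k + l = n - 1`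
(`vandermonde_congr_binomMat`). Exactly one perfect matching contributes to `Pf C`, namely the
one pairing `i` with `n - 1 - i`. Its permutation `0, n - 1, 1, n - 2, …` is even (`sign_zigzag`),
and the entries contribute `∏ (-1) ^ i * choose (n - 1) i` over `i < m` (`pf_binomMat`).

The congruence formula (`pf_congr`) is proved for the sum over all permutations instead of
canonical matchings. There it is the multilinear expansion used for `det (A * B)`
(`sum_pfTerm_congr`). For a skew-symmetric matrix each matching occurs `2 ^ m * m!` times in that
sum, because the hyperoctahedral group acts simply transitively on its orderings (`sum_pfTerm`).
This factor cannot be cancelled over a general ring, so the identity is proved over `ℤ` and then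
mapped to `R`.
-/

open Finset Equiv MvPolynomial

open scoped Classical

noncomputable section

/-- The position of the `j`-th element of the `i`-th block. -/
def bpos (m k : ℕ) (i : Fin m) (j : Fin k) : Fin (m * k) :=
  ⟨k * (i : ℕ) + (j : ℕ), by
    have hi := i.isLt
    have hj := j.isLt
    calc k * (i : ℕ) + (j : ℕ) < k * (i : ℕ) + k := by omega
      _ = k * ((i : ℕ) + 1) := by ring
      _ ≤ k * m := Nat.mul_le_mul_left k hi
      _ = m * k := Nat.mul_comm k m⟩

/-- Each block of the (oriented) partition is listed in increasing order. -/
def IsBlockMono (m k : ℕ) (π : Equiv.Perm (Fin (m * k))) : Prop :=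
  ∀ i : Fin m, StrictMono fun j : Fin k => π (bpos m k i j)

/-- The blocks are listed in increasing order of their first elements. -/
def IsLeadMono (m k : ℕ) (π : Equiv.Perm (Fin (m * k))) : Prop :=
  ∀ (i i' : Fin m) (j : Fin k), i < i' →
    π (bpos m k i ⟨0, j.pos⟩) < π (bpos m k i' ⟨0, j.pos⟩)

/-- Canonical representative of a set partition of `[n]`, `n = m*k`, into `m` blocks of
size `k`: each block increasing and blocks ordered by their minima. -/
def IsPartRep (m k : ℕ) (π : Equiv.Perm (Fin (m * k))) : Prop :=
  IsBlockMono m k π ∧ IsLeadMono m k π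

/-- A `k`-ary function is skew-symmetric. -/
def IsSkewFun {k : ℕ} {α R : Type*} [CommRing R] (f : (Fin k → α) → R) : Prop :=
  ∀ (σ : Equiv.Perm (Fin k)) (v : Fin k → α),
    f (v ∘ σ) = (Equiv.Perm.sign σ : ℤ) • f v

/-- The hyperpfaffian of a skew-symmetric `k`-ary function on `[m*k]`:
the signed sum over all set partitions of `[m*k]` into `m` blocks of size `k`. -/
def hyperPf (m k : ℕ) {R : Type*} [CommRing R]
    (f : (Fin k → Fin (m * k)) → R) : R :=
  ∑ π ∈ Finset.univ.filter (IsPartRep m k),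
    (Equiv.Perm.sign π : ℤ) • ∏ i : Fin m, f fun j => π (bpos m k i j)

/-- A polynomial in `k` variables is skew-symmetric. -/
def IsSkewPoly {k : ℕ} {R : Type*} [CommRing R] (f : MvPolynomial (Fin k) R) : Prop :=
  ∀ σ : Equiv.Perm (Fin k),
    MvPolynomial.rename (⇑σ) f = (Equiv.Perm.sign σ : ℤ) • f

/-- The hyperpfaffian `Pf (f(x_S))` of the values of a polynomial `f` in `k` variables
at the variables indexed by the `k`-subsets `S` of `[m*k]`. -/
def hyperPfPoly (m k : ℕ) {R : Type*} [CommRing R]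
    (f : MvPolynomial (Fin k) R) : MvPolynomial (Fin (m * k)) R :=
  ∑ π ∈ Finset.univ.filter (IsPartRep m k),
    (Equiv.Perm.sign π : ℤ) •
      ∏ i : Fin m, MvPolynomial.rename (fun j => π (bpos m k i j)) f

/-- The Vandermonde product. -/
def vand (n : ℕ) (R : Type*) [CommRing R] : MvPolynomial (Fin n) R :=
  ∏ p ∈ Finset.univ.filter (fun p : Fin n × Fin n => p.1 < p.2),
    (MvPolynomial.X p.2 - MvPolynomial.X p.1)

/-- The coefficient of `f` at the monomial with exponent vector `r`. -/
def coeffOf {k : ℕ} {R : Type*} [CommRing R] (f : MvPolynomial (Fin k) R)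
    (r : Fin k → ℕ) : R :=
  MvPolynomial.coeff (Finsupp.equivFunOnFinite.symm r) f

/-- Membership in `Γ_{n,k}`: a strictly increasing composition of `k/2*(n-1)`
into `k` distinct nonnegative parts. -/
def InGamma (n k : ℕ) (r : Fin k → ℕ) : Prop :=
  StrictMono r ∧ ∑ j, r j = k / 2 * (n - 1)

/-- Canonical representative of an element `β` of `R_{n,k}`, encoded as a permutation `e` of
`Fin (m*k)` (identified with `{0,…,n-1}`): the blocks of `e` are the compositions of `β`,
each block is increasing and sums to `k/2*(n-1)`, and the blocks are ordered canonically. -/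
def IsWeightRep (m k : ℕ) (e : Equiv.Perm (Fin (m * k))) : Prop :=
  IsPartRep m k e ∧
    ∀ i : Fin m, ∑ j : Fin k, ((e (bpos m k i j)) : ℕ) = k / 2 * (m * k - 1)

/-- The weight of the element `x` of `[m*k]` in the weighted oriented partition with
oriented partition (representative) `π` and weight vectors `w`. -/
def wtOf (m k : ℕ) (π : Equiv.Perm (Fin (m * k))) (w : Fin m → Fin k → ℕ) :
    Fin (m * k) → ℕ := fun x =>
  w ⟨((π.symm x : Fin (m*k)) : ℕ) / k, Nat.div_lt_of_lt_mul (lt_of_lt_of_le (π.symm x).isLt (le_of_eq (Nat.mul_comm m k)))⟩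
    ⟨((π.symm x : Fin (m*k)) : ℕ) % k, Nat.mod_lt _ (by
      have ht := (π.symm x).isLt
      have hk : k ≠ 0 := by rintro rfl; omega
      omega)⟩

end
/-! ### Blocks of size two -/

theorem bpos_eq_finProdFinEquiv {m : ℕ} (i : Fin m) (j : Fin 2) :
    bpos m 2 i j = finProdFinEquiv (i, j) := by
  apply Fin.ext
  simp [bpos, finProdFinEquiv, add_comm]

theorem bpos_inj {m : ℕ} {i i' : Fin m} {j j' : Fin 2} :
    bpos m 2 i j = bpos m 2 i' j' ↔ i = i' ∧ j = j' := by
  simp [bpos_eq_finProdFinEquiv]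

theorem prod_blocks {m : ℕ} {A : Type*} [CommMonoid A] (g : Fin (m * 2) → A) :
    ∏ a, g a = ∏ i : Fin m, g (bpos m 2 i 0) * g (bpos m 2 i 1) := by
  rw [← Equiv.prod_comp finProdFinEquiv g, Fintype.prod_prod_type]
  simp [bpos_eq_finProdFinEquiv]

theorem perm_fin_two (τ : Equiv.Perm (Fin 2)) : τ = 1 ∨ τ = Equiv.swap 0 1 := by
  revert τ
  decide

/-- The summand of the Pfaffian of `M` attached to the permutation `π`. -/
def pfTerm {m : ℕ} {A : Type*} [CommRing A] (M : Matrix (Fin (m * 2)) (Fin (m * 2)) A)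
    (π : Equiv.Perm (Fin (m * 2))) : A :=
  (Equiv.Perm.sign π : ℤ) • ∏ i : Fin m, M (π (bpos m 2 i 0)) (π (bpos m 2 i 1))

/-- The Pfaffian of the matrix `M`, as a sum over canonical representatives of perfect
matchings. -/
noncomputable def pf {m : ℕ} {A : Type*} [CommRing A] (M : Matrix (Fin (m * 2)) (Fin (m * 2)) A) : A :=
  ∑ π ∈ Finset.univ.filter (IsPartRep m 2), pfTerm M π

/-- The element of the hyperoctahedral group given by a permutation `h.1` of the blocks and
permutations `h.2 i` inside the blocks, acting on positions by
`bpos m 2 i j ↦ bpos m 2 (h.1 i) (h.2 (h.1 i) j)`. -/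
def hyperoct {m : ℕ} (h : Equiv.Perm (Fin m) × (Fin m → Equiv.Perm (Fin 2))) :
    Equiv.Perm (Fin (m * 2)) :=
  finProdFinEquiv.permCongr
    (Equiv.prodCongrRight h.2 * Equiv.prodCongrLeft fun _ : Fin 2 => h.1)

theorem hyperoct_bpos {m : ℕ} (h : Equiv.Perm (Fin m) × (Fin m → Equiv.Perm (Fin 2)))
    (i : Fin m) (j : Fin 2) :
    hyperoct h (bpos m 2 i j) = bpos m 2 (h.1 i) (h.2 (h.1 i) j) := by
  simp [hyperoct, bpos_eq_finProdFinEquiv, Equiv.permCongr_apply, -finProdFinEquiv_symm_apply]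

theorem sign_hyperoct {m : ℕ} (h : Equiv.Perm (Fin m) × (Fin m → Equiv.Perm (Fin 2))) :
    Equiv.Perm.sign (hyperoct h) = ∏ i, Equiv.Perm.sign (h.2 i) := by
  rw [hyperoct, Equiv.Perm.sign_permCongr, Equiv.Perm.sign_mul,
    Equiv.Perm.sign_prodCongrRight, Equiv.Perm.sign_prodCongrLeft]
  simp

theorem pfTerm_mul_hyperoct {m : ℕ} {A : Type*} [CommRing A]
    (M : Matrix (Fin (m * 2)) (Fin (m * 2)) A) (hM : ∀ a b, M a b = -M b a)
    (π : Equiv.Perm (Fin (m * 2)))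
    (h : Equiv.Perm (Fin m) × (Fin m → Equiv.Perm (Fin 2))) :
    pfTerm M (π * hyperoct h) = pfTerm M π := by
  have key : ∀ i, M (π (bpos m 2 i (h.2 i 0))) (π (bpos m 2 i (h.2 i 1)))
      = (((Equiv.Perm.sign (h.2 i) : ℤ)) : A) *
        M (π (bpos m 2 i 0)) (π (bpos m 2 i 1)) := by
    intro i
    rcases perm_fin_two (h.2 i) with e | e
    · simp [e]
    · simp [e, ← hM]
  have hprod : ∏ i, M ((π * hyperoct h) (bpos m 2 i 0)) ((π * hyperoct h) (bpos m 2 i 1))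
      = (∏ i, (((Equiv.Perm.sign (h.2 i) : ℤ)) : A)) *
        ∏ i, M (π (bpos m 2 i 0)) (π (bpos m 2 i 1)) := by
    simp only [Equiv.Perm.mul_apply, hyperoct_bpos]
    rw [Equiv.prod_comp h.1
      (fun i => M (π (bpos m 2 i (h.2 i 0))) (π (bpos m 2 i (h.2 i 1))))]
    simp only [key, Finset.prod_mul_distrib]
  have hsq : (∏ i, (((Equiv.Perm.sign (h.2 i) : ℤ)) : A)) *
      (∏ i, (((Equiv.Perm.sign (h.2 i) : ℤ)) : A)) = 1 := by
    rw [← Finset.prod_mul_distrib]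
    refine Finset.prod_eq_one fun i _ => ?_
    rw [← Int.cast_mul, ← Units.val_mul, Int.units_mul_self]
    simp
  rw [pfTerm, pfTerm, hprod, Equiv.Perm.sign_mul, sign_hyperoct]
  simp only [zsmul_eq_mul]
  push_cast
  linear_combination ((Equiv.Perm.sign π : ℤ) : A) *
    (∏ i, M (π (bpos m 2 i 0)) (π (bpos m 2 i 1))) * hsq

theorem isPartRep_two_iff {m : ℕ} (π : Equiv.Perm (Fin (m * 2))) :
    IsPartRep m 2 π ↔ (∀ i, π (bpos m 2 i 0) < π (bpos m 2 i 1)) ∧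
      StrictMono fun i => π (bpos m 2 i 0) := by
  constructor
  · rintro ⟨h1, h2⟩
    exact ⟨fun i => h1 i (by decide), fun i i' hi => h2 i i' 0 hi⟩
  · rintro ⟨h1, h2⟩
    refine ⟨fun i => ?_, fun i i' _ hi => h2 hi⟩
    rw [Fin.strictMono_iff_lt_succ]
    intro j
    fin_cases j
    exact h1 i

theorem isPartRep_mul_hyperoct {m : ℕ} (π : Equiv.Perm (Fin (m * 2)))
    (h : Equiv.Perm (Fin m) × (Fin m → Equiv.Perm (Fin 2))) :
    IsPartRep m 2 (π * hyperoct h) ↔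
      (∀ i, π (bpos m 2 i (h.2 i 0)) < π (bpos m 2 i (h.2 i 1))) ∧
      StrictMono ((fun i => π (bpos m 2 i (h.2 i 0))) ∘ h.1) := by
  rw [isPartRep_two_iff]
  simp only [Equiv.Perm.mul_apply, hyperoct_bpos]
  refine and_congr ⟨fun H i => ?_, fun H i => H (h.1 i)⟩ Iff.rfl
  simpa using H (h.1.symm i)

/-- Every ordering of the points becomes canonical under exactly one element of the
hyperoctahedral group: first sort inside the blocks, then sort the blocks by their minima. -/
theorem existsUnique_hyperoct {m : ℕ} (π : Equiv.Perm (Fin (m * 2))) :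
    ∃! h : Equiv.Perm (Fin m) × (Fin m → Equiv.Perm (Fin 2)),
      IsPartRep m 2 (π * hyperoct h) := by
  simp only [isPartRep_mul_hyperoct]
  have hs : ∀ i, ∃! τ : Equiv.Perm (Fin 2),
      π (bpos m 2 i (τ 0)) < π (bpos m 2 i (τ 1)) := by
    intro i
    have hne : π (bpos m 2 i 0) ≠ π (bpos m 2 i 1) := by
      rw [Ne, π.injective.eq_iff, bpos_inj]
      simp
    rcases lt_or_gt_of_ne hne with hlt | hlt
    · refine ⟨1, by simpa using hlt, fun τ hτ => ?_⟩
      rcases perm_fin_two τ with rfl | rfl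
      · rfl
      · simp only [Equiv.swap_apply_left, Equiv.swap_apply_right] at hτ
        exact absurd hτ hlt.asymm
    · refine ⟨Equiv.swap 0 1, by simpa using hlt, fun τ hτ => ?_⟩
      rcases perm_fin_two τ with rfl | rfl
      · simp only [Equiv.Perm.one_apply] at hτ
        exact absurd hτ hlt.asymm
      · rfl
  choose s hs1 hs2 using hs
  have hl : Function.Injective fun i => π (bpos m 2 i (s i 0)) := by
    intro i i' h
    exact (bpos_inj.mp (π.injective h)).1
  refine ⟨(Tuple.sort fun i => π (bpos m 2 i (s i 0)), s), ⟨hs1, ?_⟩, ?_⟩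
  · exact (Tuple.monotone_sort _).strictMono_of_injective (hl.comp (Equiv.injective _))
  · rintro ⟨σ, t⟩ ⟨h1, h2⟩
    obtain rfl : t = s := funext fun i => hs2 i _ (h1 i)
    refine Prod.ext (Equiv.ext fun i => hl ?_) rfl
    exact congrFun (Tuple.unique_monotone h2.monotone (Tuple.monotone_sort _)) i

/-- For a skew-symmetric matrix, summing over all orderings counts each perfect matching once
for each element of the hyperoctahedral group. -/
theorem sum_pfTerm {m : ℕ} {A : Type*} [CommRing A]
    (M : Matrix (Fin (m * 2)) (Fin (m * 2)) A) (hM : ∀ a b, M a b = -M b a) :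
    ∑ π, pfTerm M π =
      Fintype.card (Equiv.Perm (Fin m) × (Fin m → Equiv.Perm (Fin 2))) • pf M := by
  calc ∑ π, pfTerm M π
      = ∑ π, ∑ h : Equiv.Perm (Fin m) × (Fin m → Equiv.Perm (Fin 2)),
          if IsPartRep m 2 (π * hyperoct h) then pfTerm M (π * hyperoct h) else 0 := by
        refine Finset.sum_congr rfl fun π _ => ?_
        obtain ⟨h, hh, huniq⟩ := existsUnique_hyperoct π
        rw [Finset.sum_eq_single h]
        · rw [if_pos hh, pfTerm_mul_hyperoct M hM]
        · intro h' _ hne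
          exact if_neg fun H => hne (huniq _ H)
        · simp
    _ = ∑ h : Equiv.Perm (Fin m) × (Fin m → Equiv.Perm (Fin 2)), pf M := by
        rw [Finset.sum_comm]
        refine Finset.sum_congr rfl fun h _ => ?_
        rw [pf, Finset.sum_filter]
        exact Equiv.sum_comp (Equiv.mulRight (hyperoct h))
          fun π => if IsPartRep m 2 π then pfTerm M π else 0
    _ = _ := by simp

/-! ### The Pfaffian of a congruent matrix -/

/-- Functions on `Fin (m * 2)` as families of pairs indexed by the blocks. -/
def pairEquiv (m : ℕ) (S : Type*) : (Fin (m * 2) → S) ≃ (Fin m → S × S) :=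
  ((finProdFinEquiv.arrowCongr (Equiv.refl S)).symm.trans
    (Equiv.curry (Fin m) (Fin 2) S)).trans
    ((Equiv.refl (Fin m)).arrowCongr (finTwoArrowEquiv S))

theorem pairEquiv_apply {m : ℕ} {S : Type*} (e : Fin (m * 2) → S) (i : Fin m) :
    pairEquiv m S e i = (e (bpos m 2 i 0), e (bpos m 2 i 1)) := by
  simp [pairEquiv, bpos_eq_finProdFinEquiv, Function.curry]

/-- Symmetrized form of `Pf (V * C * Vᵀ) = det V * Pf C`. Expanding multilinearly gives a sum
over functions `e` of minors of `V` with columns selected by `e`, which vanish unless `e` is a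
permutation. -/
theorem sum_pfTerm_congr {m : ℕ} {A : Type*} [CommRing A]
    (V C : Matrix (Fin (m * 2)) (Fin (m * 2)) A) :
    ∑ π, pfTerm (V * C * V.transpose) π = V.det * ∑ π, pfTerm C π := by
  have hentry : ∀ a b, (V * C * V.transpose) a b
      = ∑ p : Fin (m * 2) × Fin (m * 2), C p.1 p.2 * (V a p.1 * V b p.2) := by
    intro a b
    rw [Fintype.sum_prod_type_right]
    simp only [Matrix.mul_apply, Matrix.transpose_apply, Finset.sum_mul]
    refine Finset.sum_congr rfl fun k _ => Finset.sum_congr rfl fun l _ => ?_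
    ring
  have hexp : ∀ π : Equiv.Perm (Fin (m * 2)), pfTerm (V * C * V.transpose) π
      = ∑ e : Fin (m * 2) → Fin (m * 2), (∏ i, C (e (bpos m 2 i 0)) (e (bpos m 2 i 1))) *
          (Equiv.Perm.sign π • ∏ a, V (π a) (e a)) := by
    intro π
    simp only [pfTerm, hentry]
    rw [Fintype.prod_sum, ← Equiv.sum_comp (pairEquiv m (Fin (m * 2))), Finset.smul_sum]
    refine Finset.sum_congr rfl fun e _ => ?_
    simp only [pairEquiv_apply, Finset.prod_mul_distrib, prod_blocks (fun a => V (π a) (e a)),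
      Units.smul_def, zsmul_eq_mul]
    ring
  calc ∑ π, pfTerm (V * C * V.transpose) π
      = ∑ e : Fin (m * 2) → Fin (m * 2), (∏ i, C (e (bpos m 2 i 0)) (e (bpos m 2 i 1))) *
          (V.submatrix id e).det := by
        simp only [hexp]
        rw [Finset.sum_comm]
        refine Finset.sum_congr rfl fun e _ => ?_
        rw [← Finset.mul_sum, Matrix.det_apply]
        rfl
    _ = ∑ e : Equiv.Perm (Fin (m * 2)), V.det * pfTerm C e := by
        symm
        refine Fintype.sum_of_injective (fun e : Equiv.Perm (Fin (m * 2)) => ⇑e)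
          DFunLike.coe_injective _ _ ?_ ?_
        · intro e he
          have hinj : ¬ Function.Injective e := fun h =>
            he ⟨Equiv.ofBijective e (Finite.injective_iff_bijective.mp h), rfl⟩
          simp only [Function.Injective, not_forall] at hinj
          obtain ⟨a, b, hab, hne⟩ := hinj
          rw [Matrix.det_zero_of_column_eq hne, mul_zero]
          intro k
          simp [hab]
        · intro e
          rw [Matrix.det_permute', pfTerm, zsmul_eq_mul]
          ring
    _ = _ := by rw [Finset.mul_sum]

theorem pf_congr {m : ℕ} {A : Type*} [CommRing A] [IsAddTorsionFree A]
    (V C : Matrix (Fin (m * 2)) (Fin (m * 2)) A) (hC : ∀ a b, C a b = -C b a) :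
    pf (V * C * V.transpose) = V.det * pf C := by
  have hM : ∀ a b, (V * C * V.transpose) a b = -(V * C * V.transpose) b a := by
    have hCT : C.transpose = -C := by
      ext a b
      exact hC b a
    have hT : (V * C * V.transpose).transpose = -(V * C * V.transpose) := by
      simp [Matrix.transpose_mul, hCT, Matrix.mul_assoc]
    exact fun a b => congrFun (congrFun hT b) a
  have h := sum_pfTerm_congr V C
  rw [sum_pfTerm _ hM, sum_pfTerm _ hC, mul_smul_comm] at h
  exact nsmul_right_injective Fintype.card_ne_zero h

/-! ### The antidiagonal matrix of binomial coefficients -/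

/-- The matrix of coefficients of `(y - x) ^ (2 * m - 1)`: the entry at `(k, l)` is the
coefficient of `x ^ k * y ^ l`. -/
def binomMat (m : ℕ) (A : Type*) [CommRing A] : Matrix (Fin (m * 2)) (Fin (m * 2)) A :=
  fun k l => if (k : ℕ) + l = 2 * m - 1 then (-1) ^ (k : ℕ) * ((2 * m - 1).choose k : A) else 0

theorem binomMat_skew (m : ℕ) (A : Type*) [CommRing A] (a b : Fin (m * 2)) :
    binomMat m A a b = -binomMat m A b a := by
  unfold binomMat
  by_cases h : (a : ℕ) + b = 2 * m - 1
  · rw [if_pos h, if_pos (by omega), ← Nat.choose_symm_of_eq_add h.symm, neg_mul_eq_neg_mul]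
    congr 1
    have ha := a.isLt
    -- The exponents have odd sum.
    have hodd : (-1 : A) ^ ((a : ℕ) + b) = -1 := by
      rw [h]
      exact Odd.neg_one_pow ⟨m - 1, by omega⟩
    have hsq : (-1 : A) ^ (b : ℕ) * (-1) ^ (b : ℕ) = 1 := by
      rw [← mul_pow]; simp
    rw [pow_add] at hodd
    linear_combination (-1 : A) ^ (b : ℕ) * hodd - (-1 : A) ^ (a : ℕ) * hsq
  · rw [if_neg h, if_neg (by omega), neg_zero]

theorem vandermonde_congr_binomMat {m : ℕ} {A : Type*} [CommRing A] (x : Fin (m * 2) → A)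
    (a b : Fin (m * 2)) :
    (Matrix.vandermonde x * binomMat m A * (Matrix.vandermonde x).transpose) a b
      = (x b - x a) ^ (2 * m - 1) := by
  have ha := a.isLt
  have hn : 2 * m - 1 + 1 = m * 2 := by omega
  rw [sub_eq_neg_add, add_pow, hn, Finset.sum_range]
  simp only [Matrix.mul_apply, Matrix.transpose_apply, Finset.sum_mul, Matrix.vandermonde_apply]
  rw [Finset.sum_comm]
  refine Finset.sum_congr rfl fun k _ => ?_
  have hk := k.isLt
  rw [Finset.sum_eq_single (⟨2 * m - 1 - k, by omega⟩ : Fin (m * 2))]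
  · rw [binomMat, if_pos (by simp only; omega), neg_pow (x a)]
    ring
  · intro l _ hl
    rw [binomMat, if_neg, mul_zero, zero_mul]
    intro h
    exact hl (Fin.ext (by simp only; omega))
  · simp

/-- The permutation `0, n - 1, 1, n - 2, 2, …` with `n = 2 * m`, matching `i` with
`n - 1 - i`. -/
noncomputable def zigzag (m : ℕ) : Equiv.Perm (Fin (m * 2)) :=
  Equiv.ofBijective
    (fun a => if (a : ℕ) % 2 = 0 then ⟨(a : ℕ) / 2, by omega⟩
      else ⟨2 * m - 1 - (a : ℕ) / 2, by omega⟩)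
    (Finite.injective_iff_bijective.mp (by
      intro a b h
      have ha := a.isLt
      have hb := b.isLt
      apply Fin.ext
      dsimp only at h
      split_ifs at h <;> simp only [Fin.mk.injEq] at h <;> omega))

theorem zigzag_val {m : ℕ} (a : Fin (m * 2)) :
    (zigzag m a : ℕ) = if (a : ℕ) % 2 = 0 then (a : ℕ) / 2 else 2 * m - 1 - (a : ℕ) / 2 := by
  simp only [zigzag, Equiv.ofBijective_apply]
  split_ifs <;> rfl

theorem zigzag_bpos_zero {m : ℕ} (i : Fin m) : (zigzag m (bpos m 2 i 0) : ℕ) = i := by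
  rw [zigzag_val, if_pos (by simp [bpos])]
  simp [bpos]

theorem zigzag_bpos_one {m : ℕ} (i : Fin m) :
    (zigzag m (bpos m 2 i 1) : ℕ) = 2 * m - 1 - i := by
  rw [zigzag_val, if_neg (by simp [bpos, Nat.add_mod])]
  simp only [bpos, Fin.val_one]
  omega

/-- The two positions of a block of `zigzag m` close the same number of inversions. -/
theorem sign_zigzag (m : ℕ) : Equiv.Perm.sign (zigzag m) = 1 := by
  rw [Equiv.Perm.sign_eq_prod_prod_Iio, prod_blocks]
  refine Finset.prod_eq_one fun i _ => ?_
  have hins : Finset.Iio (bpos m 2 i 1) = insert (bpos m 2 i 0) (Finset.Iio (bpos m 2 i 0)) := by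
    ext a
    simp only [Finset.mem_Iio, Finset.mem_insert, Fin.lt_def, Fin.ext_iff, bpos, Fin.val_zero,
      Fin.val_one]
    omega
  rw [hins, Finset.prod_insert (by simp), if_pos, one_mul]
  · rw [Finset.prod_congr rfl (g := fun a =>
      if zigzag m a < zigzag m (bpos m 2 i 1) then (1 : ℤˣ) else -1)]
    · exact Int.units_mul_self _
    · intro a ha
      have hi := i.isLt
      have hav := zigzag_val a
      have h0 := zigzag_bpos_zero i
      have h1 := zigzag_bpos_one i
      simp only [Finset.mem_Iio, Fin.lt_def, bpos, Fin.val_zero] at ha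
      refine if_congr ?_ rfl rfl
      rw [Fin.lt_def, Fin.lt_def, hav, h0, h1]
      split_ifs <;> omega
  · have hi := i.isLt
    rw [Fin.lt_def, zigzag_bpos_zero, zigzag_bpos_one]
    omega

theorem isPartRep_zigzag (m : ℕ) : IsPartRep m 2 (zigzag m) := by
  rw [isPartRep_two_iff]
  constructor
  · intro i
    have hi := i.isLt
    rw [Fin.lt_def, zigzag_bpos_zero, zigzag_bpos_one]
    omega
  · intro i i' h
    simpa only [Fin.lt_def, zigzag_bpos_zero] using h

/-- The only perfect matching of `{0, …, 2 * m - 1}` all of whose pairs sum to `2 * m - 1`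
is the one of `zigzag m`. -/
theorem eq_zigzag {m : ℕ} {e : Equiv.Perm (Fin (m * 2))} (he : IsPartRep m 2 e)
    (hsum : ∀ i, (e (bpos m 2 i 0) : ℕ) + e (bpos m 2 i 1) = 2 * m - 1) : e = zigzag m := by
  rw [isPartRep_two_iff] at he
  obtain ⟨h1, h2⟩ := he
  have hlt : ∀ i, (e (bpos m 2 i 0) : ℕ) < m := by
    intro i
    have := hsum i
    have := Fin.lt_def.mp (h1 i)
    omega
  -- The leads form a strictly increasing self-map of `Fin m`.
  have hid : (fun i => (⟨e (bpos m 2 i 0), hlt i⟩ : Fin m)) = id :=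
    StrictMono.eq_id fun i i' h => h2 h
  have h0 : ∀ i, (e (bpos m 2 i 0) : ℕ) = i := fun i => congrArg Fin.val (congrFun hid i)
  ext a
  obtain ⟨⟨i, j⟩, rfl⟩ := finProdFinEquiv.surjective a
  rw [← bpos_eq_finProdFinEquiv]
  have := h0 i
  have := hsum i
  fin_cases j
  · exact (h0 i).trans (zigzag_bpos_zero i).symm
  · refine Eq.trans ?_ (zigzag_bpos_one i).symm
    simp only [Fin.mk_one]
    omega

theorem pf_binomMat (m : ℕ) (A : Type*) [CommRing A] :
    pf (binomMat m A) =
      (-1 : A) ^ m.choose 2 * ∏ i ∈ Finset.range m, ((2 * m - 1).choose i : A) := by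
  rw [pf, Finset.sum_eq_single (zigzag m)]
  · have hterm : ∀ i : Fin m,
        binomMat m A (zigzag m (bpos m 2 i 0)) (zigzag m (bpos m 2 i 1))
          = (-1) ^ (i : ℕ) * ((2 * m - 1).choose i : A) := by
      intro i
      have hi := i.isLt
      rw [binomMat, zigzag_bpos_zero, zigzag_bpos_one, if_pos (by omega)]
    simp only [pfTerm, sign_zigzag, hterm, Units.val_one, one_smul]
    rw [Finset.prod_mul_distrib, Finset.prod_pow_eq_pow_sum, Finset.prod_range,
      ← Finset.sum_range (fun i => i), Finset.sum_range_id, Nat.choose_two_right]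
  · intro e he hne
    rw [Finset.mem_filter] at he
    have : ∃ i, (e (bpos m 2 i 0) : ℕ) + e (bpos m 2 i 1) ≠ 2 * m - 1 := by
      by_contra! h
      exact hne (eq_zigzag he.2 h)
    obtain ⟨i, hi⟩ := this
    rw [pfTerm, Finset.prod_eq_zero (Finset.mem_univ i) (if_neg hi), smul_zero]
  · intro h
    exact absurd (Finset.mem_filter.mpr ⟨Finset.mem_univ _, isPartRep_zigzag m⟩) h

/-! ### Torelli's identity -/

theorem vand_eq_det (n : ℕ) (R : Type*) [CommRing R] :
    vand n R = (Matrix.vandermonde fun i : Fin n => (X i : MvPolynomial (Fin n) R)).det := by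
  rw [Matrix.det_vandermonde, vand, Finset.prod_filter, Fintype.prod_prod_type]
  refine Finset.prod_congr rfl fun i _ => ?_
  rw [← Finset.prod_filter]
  refine Finset.prod_congr ?_ fun _ _ => rfl
  ext j
  simp

theorem hyperPfPoly_two_eq_pf (m : ℕ) (R : Type*) [CommRing R] :
    hyperPfPoly m 2 ((X (1 : Fin 2) - X (0 : Fin 2)) ^ (2 * m - 1) : MvPolynomial (Fin 2) R)
      = pf (fun a b => ((X b - X a) ^ (2 * m - 1) : MvPolynomial (Fin (m * 2)) R)) := by
  simp [hyperPfPoly, pf, pfTerm]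

theorem torelli_int (m : ℕ) :
    pf (fun a b => ((X b - X a) ^ (2 * m - 1) : MvPolynomial (Fin (m * 2)) ℤ))
      = ((-1) ^ m.choose 2 * ∏ i ∈ Finset.range m,
            ((2 * m - 1).choose i : MvPolynomial (Fin (m * 2)) ℤ)) *
          vand (m * 2) ℤ := by
  have h := pf_congr
    (Matrix.vandermonde fun i : Fin (m * 2) => (X i : MvPolynomial (Fin (m * 2)) ℤ))
    (binomMat m _) (binomMat_skew m _)
  rw [pf_binomMat, ← vand_eq_det, mul_comm (vand _ _)] at h
  rw [← h]
  congr 1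
  funext a b
  exact (vandermonde_congr_binomMat _ a b).symm

theorem stmt13 (m : ℕ) (R : Type*) [CommRing R] :
    hyperPfPoly m 2
        ((MvPolynomial.X (1 : Fin 2) - MvPolynomial.X (0 : Fin 2)) ^ (2 * m - 1))
      = MvPolynomial.C ((-1 : R) ^ m.choose 2 *
            ∏ i ∈ Finset.range m, ((2 * m - 1).choose i : R))
          * vand (m * 2) R := by
  -- Both sides are images of the corresponding integral polynomials.
  have h := congrArg (MvPolynomial.map (Int.castRingHom R)) (torelli_int m)
  rw [hyperPfPoly_two_eq_pf]
  simpa [pf, pfTerm, vand] using h
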